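/- arXiv:0706.3397 — 5 statements merged into one kernel-verified Lean document; each statement's English description precedes it below -/
import Mathlib

section
/- Let n ≥ 3 be an integer and μ > 0 a real number. The real symmetric 2×2 matrix A = [[2nμ, 2n³μ], [2n³μ, 2n²μ² + n⁴(n−1)μ]] is positive semidefinite if and only if μ ≥ n²(n+1)/2. -/
/-!
A Hermitian `2 × 2` matrix with positive corner `a` is positive semidefinite exactly when its
determinant is nonnegative: `a` times the quadratic form is `|(M x)₀|² + det M * |x₁|²`, and the
first summand is killed by the vector `(-M₀₁, M₀₀)`. Here the determinant is
`2n³μ²(2μ - n² - n³)`, so its sign is that of `2μ - n²(n + 1)`.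
-/

open Matrix

section FinTwo

variable {R : Type*} [CommRing R]

theorem mulVec_eq_vecCons_zero_det_fin_two (M : Matrix (Fin 2) (Fin 2) R) :
    M *ᵥ ![-M 0 1, M 0 0] = ![0, M.det] := by
  ext i
  fin_cases i <;>
    simp only [mulVec, dotProduct, Fin.sum_univ_two, Fin.zero_eta, Fin.mk_one, cons_val_zero,
      cons_val_one, det_fin_two] <;>
    ring

variable [StarRing R] {M : Matrix (Fin 2) (Fin 2) R}

theorem apply_zero_zero_mul_dotProduct_mulVec_fin_two (hM : M.IsHermitian) (x : Fin 2 → R) :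
    M 0 0 * (star x ⬝ᵥ M *ᵥ x) =
      star ((M *ᵥ x) 0) * (M *ᵥ x) 0 + star (x 1) * M.det * x 1 := by
  have star_corner : star (M 0 0) = M 0 0 := hM.apply 0 0
  have star_upper : star (M 0 1) = M 1 0 := hM.apply 1 0
  simp only [mulVec, dotProduct, Fin.sum_univ_two, Pi.star_apply, star_add, star_mul',
    star_corner, star_upper, det_fin_two]
  ring

variable [PartialOrder R] [StarOrderedRing R] [PosMulReflectLE R]

theorem posSemidef_fin_two_iff_det_nonneg (hM : M.IsHermitian) (corner_pos : 0 < M 0 0) :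
    M.PosSemidef ↔ 0 ≤ M.det := by
  constructor
  · intro hpsd
    have form_eq : star ![-M 0 1, M 0 0] ⬝ᵥ M *ᵥ ![-M 0 1, M 0 0] = M 0 0 * M.det := by
      rw [mulVec_eq_vecCons_zero_det_fin_two]
      simp [dotProduct, hM.apply 0 0]
    have form_nonneg := hpsd.dotProduct_mulVec_nonneg ![-M 0 1, M 0 0]
    rw [form_eq] at form_nonneg
    exact le_of_mul_le_mul_left (by simpa using form_nonneg) corner_pos
  · intro det_nonneg
    refine .of_dotProduct_mulVec_nonneg hM fun x ↦ ?_
    have corner_mul_form_nonneg : 0 ≤ M 0 0 * (star x ⬝ᵥ M *ᵥ x) := by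
      rw [apply_zero_zero_mul_dotProduct_mulVec_fin_two hM]
      exact add_nonneg (star_mul_self_nonneg _) (star_left_conjugate_nonneg det_nonneg _)
    exact le_of_mul_le_mul_left (by simpa using corner_mul_form_nonneg) corner_pos

end FinTwo

/-- The matrix `A` of vacuum expectation values `⟨B⁰₂ₙB²ⁿ₀⟩`, `⟨B⁰₂ₙ(Bⁿ₀)²⟩`, `⟨(B⁰ₙ)²(Bⁿ₀)²⟩` of
the `n`-th order RHPWN algebra on an interval of measure `μ`. The order `n` is an element of the
ring of scalars, since the entries are polynomials in `n` and `μ`. -/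
def rhpwnMatrix {R : Type*} [CommRing R] (n μ : R) : Matrix (Fin 2) (Fin 2) R :=
  of ![![2 * n * μ, 2 * n ^ 3 * μ],
       ![2 * n ^ 3 * μ, 2 * n ^ 2 * μ ^ 2 + n ^ 4 * (n - 1) * μ]]

theorem det_rhpwnMatrix {R : Type*} [CommRing R] (n μ : R) :
    (rhpwnMatrix n μ).det = 2 * n ^ 3 * μ ^ 2 * (2 * μ - n ^ 2 - n ^ 3) := by
  rw [rhpwnMatrix, det_fin_two_of]
  ring

theorem isHermitian_rhpwnMatrix {R : Type*} [CommRing R] [StarRing R] [TrivialStar R] (n μ : R) :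
    (rhpwnMatrix n μ).IsHermitian := by
  ext i j
  fin_cases i <;> fin_cases j <;> simp [rhpwnMatrix]

theorem rhpwn_nogo_matrix_psd_iff_general {K : Type*} [Field K] [LinearOrder K]
    [StarRing K] [StarOrderedRing K] [TrivialStar K] {n μ : K} (hn : 0 < n) (hμ : 0 < μ) :
    (rhpwnMatrix n μ).PosSemidef ↔ n ^ 2 * (n + 1) / 2 ≤ μ := by
  have corner_pos : 0 < rhpwnMatrix n μ 0 0 := by
    change 0 < 2 * n * μ
    positivity
  have factor_pos : 0 < 2 * n ^ 3 * μ ^ 2 := by positivity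
  calc (rhpwnMatrix n μ).PosSemidef
    _ ↔ 0 ≤ (rhpwnMatrix n μ).det :=
      posSemidef_fin_two_iff_det_nonneg (isHermitian_rhpwnMatrix n μ) corner_pos
    _ ↔ 0 ≤ 2 * μ - n ^ 2 - n ^ 3 := by
      rw [det_rhpwnMatrix, mul_nonneg_iff_of_pos_left factor_pos]
    _ ↔ n ^ 2 * (n + 1) / 2 ≤ μ := by
      constructor <;> intro h <;> linarith

theorem rhpwn_nogo_matrix_psd_iff (n : ℕ) (hn : 3 ≤ n) (μ : ℝ) (hμ : 0 < μ) :
    (Matrix.of ![![2 * n * μ, 2 * n ^ 3 * μ],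
                 ![2 * n ^ 3 * μ, 2 * n ^ 2 * μ ^ 2 + n ^ 4 * (n - 1) * μ]]).PosSemidef ↔
      μ ≥ n ^ 2 * (n + 1) / 2 :=
  rhpwn_nogo_matrix_psd_iff_general (Nat.cast_pos.2 (by lia)) hμ
end

section
/- Let V be a complex vector space, Φ ∈ V, n ≥ 1 an integer, μ > 0 a real number, and let B⁺, B⁻, N be linear endomorphisms of V such that: B⁻Φ = 0; B⁻∘B⁺ − B⁺∘B⁻ = n²·N; and N((B⁺)ᵏΦ) = (μ/n + k·n·(n−1))·(B⁺)ᵏΦ for every integer k ≥ 0. Then for every integer k ≥ 0, B⁻((B⁺)^{k+1}Φ) = n·(k+1)·(μ + k·n²(n−1)/2)·(B⁺)ᵏΦ. -/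
/-!
Moving the annihilator `a` past one creator `c` at a time, each exchange contributes the eigenvalue
of the commutator `⁅a, c⁆` on the number vector it meets, so `a` sends `c ^ (k + 1) v` to the sum of
the first `k + 1` eigenvalues times `c ^ k v`. For TRHPWN these eigenvalues are
`n² (μ / n + i n (n - 1)) = n μ + i n³ (n - 1)`, an arithmetic progression in `i`.
-/

open Finset

theorem sum_range_succ_arithmetic_progression {K : Type*} [Field K] [NeZero (2 : K)]
    (a d : K) (k : ℕ) :
    ∑ i ∈ range (k + 1), (a + i * d) = (k + 1) * (a + k * d / 2) := by
  induction k with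
  | zero => simp
  | succ k ih =>
    rw [sum_range_succ, ih]
    push_cast
    field_simp
    ring

section Commutator

variable {R M : Type*} [CommRing R] [AddCommGroup M] [Module R M]

theorem apply_apply_eq_add_lie_apply (a c : Module.End R M) (x : M) :
    a (c x) = c (a x) + ⁅a, c⁆ x := by
  simp [Ring.lie_def]

theorem apply_pow_succ_eq_sum_smul_of_lie_apply_pow {a c : Module.End R M} {v : M} {w : ℕ → R}
    (hv : a v = 0) (hw : ∀ k, ⁅a, c⁆ ((c ^ k) v) = w k • (c ^ k) v) (k : ℕ) :
    a ((c ^ (k + 1)) v) = (∑ i ∈ range (k + 1), w i) • (c ^ k) v := by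
  induction k with
  | zero => simpa [apply_apply_eq_add_lie_apply a c, hv] using hw 0
  | succ k ih =>
    calc a ((c ^ (k + 2)) v)
        = c (a ((c ^ (k + 1)) v)) + ⁅a, c⁆ ((c ^ (k + 1)) v) := by
          rw [pow_succ', Module.End.mul_apply, apply_apply_eq_add_lie_apply]
      _ = (∑ i ∈ range (k + 1), w i) • (c ^ (k + 1)) v + w (k + 1) • (c ^ (k + 1)) v := by
          rw [ih, hw, map_smul, ← Module.End.mul_apply, ← pow_succ']
      _ = (∑ i ∈ range (k + 2), w i) • (c ^ (k + 1)) v := by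
          rw [← add_smul, ← sum_range_succ]

end Commutator

theorem trhpwn_annihilation_action_general {K V : Type*} [Field K] [NeZero (2 : K)]
    [AddCommGroup V] [Module K V] {Φ : V} {n μ : K} (hn : n ≠ 0) {Bp Bm N : Module.End K V}
    (h0 : Bm Φ = 0) (hcomm : Bm * Bp - Bp * Bm = n ^ 2 • N)
    (hN : ∀ k : ℕ, N ((Bp ^ k) Φ) = (μ / n + k * n * (n - 1)) • (Bp ^ k) Φ) (k : ℕ) :
    Bm ((Bp ^ (k + 1)) Φ) = (n * (k + 1) * (μ + k * (n ^ 2 * (n - 1)) / 2)) • (Bp ^ k) Φ := by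
  have lie_apply_pow (i : ℕ) :
      ⁅Bm, Bp⁆ ((Bp ^ i) Φ) = (n * μ + i * (n ^ 3 * (n - 1))) • (Bp ^ i) Φ := by
    rw [Ring.lie_def, hcomm, LinearMap.smul_apply, hN, smul_smul]
    congr 1
    field_simp
  rw [apply_pow_succ_eq_sum_smul_of_lie_apply_pow h0 lie_apply_pow,
    sum_range_succ_arithmetic_progression]
  congr 1
  ring

theorem trhpwn_annihilation_action (V : Type*) [AddCommGroup V] [Module ℂ V] (Φ : V)
    (n : ℕ) (hn : 1 ≤ n) (μ : ℝ) (hμ : 0 < μ)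
    (Bp Bm N : Module.End ℂ V)
    (h0 : Bm Φ = 0)
    (hcomm : Bm * Bp - Bp * Bm = ((n : ℂ) ^ 2) • N)
    (hN : ∀ k : ℕ, N ((Bp ^ k) Φ) = ((μ / n + k * n * (n - 1) : ℝ) : ℂ) • (Bp ^ k) Φ) :
    ∀ k : ℕ, Bm ((Bp ^ (k + 1)) Φ) =
      ((n * (k + 1) * (μ + k * (n ^ 2 * (n - 1)) / 2) : ℝ) : ℂ) • (Bp ^ k) Φ := by
  push_cast at hN ⊢
  exact trhpwn_annihilation_action_general (Nat.cast_ne_zero.mpr (by lia)) h0 hcomm hN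
end

section
/- Let 𝒜 be a complex star-algebra and let B : ℕ × ℕ × [0, ∞) → 𝒜 be a family of elements satisfying, for all n, k, N, K ∈ ℕ and all t, s ≥ 0: (i) (B(n, k, t))* = B(k, n, t); (ii) if k·N = K·n then B(n, k, t)·B(N, K, s) = B(N, K, s)·B(n, k, t), and if n + N ≥ 1 and k + K ≥ 1 then B(n, k, t)·B(N, K, s) − B(N, K, s)·B(n, k, t) = (k·N − K·n)·B(n+N−1, k+K−1, min(t, s)). Let Λ be a finite subset of ℕ × ℕ such that (n, k) ∈ Λ implies (k, n) ∈ Λ, and let c : Λ → ℂ satisfy c(n, k) = conj(c(k, n)) for all (n, k) ∈ Λ. Define x(t) := ∑_{(n,k)∈Λ} c(n, k)·B(n, k, t). Then for all t, s ≥ 0: x(t)* = x(t) and x(t)·x(s) = x(s)·x(t). -/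
/-!
The bracket `[B n k t, B N K s]` depends on the times only through `min t s`, so exchanging `t`
and `s` does not change it. By antisymmetry of the bracket, in the expansion of `[x t, x s]` the
term of the pair `(p, q)` therefore cancels the term of `(q, p)`, and the diagonal terms vanish.
Self-adjointness holds because `star` permutes the terms of `x t` by swapping the two indices.
-/

open scoped NNReal

section Sums

variable {ι : Type*}

theorem isSelfAdjoint_sum_of_star_eq {A : Type*} [AddCommMonoid A] [StarAddMonoid A]
    {s : Finset ι} {f : ι → A} (σ : ι → ι) (hσ_mem : ∀ i ∈ s, σ i ∈ s)
    (hσ_invol : ∀ i ∈ s, σ (σ i) = i) (hf : ∀ i ∈ s, star (f i) = f (σ i)) :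
    IsSelfAdjoint (∑ i ∈ s, f i) := by
  rw [isSelfAdjoint_iff, star_sum]
  exact Finset.sum_bij' (fun i _ ↦ σ i) (fun i _ ↦ σ i) hσ_mem hσ_mem hσ_invol hσ_invol hf

theorem lie_sum_sum {κ A : Type*} [NonUnitalNonAssocRing A] (s : Finset ι) (t : Finset κ)
    (f : ι → A) (g : κ → A) :
    ⁅∑ i ∈ s, f i, ∑ j ∈ t, g j⁆ = ∑ p ∈ s ×ˢ t, ⁅f p.1, g p.2⁆ := by
  simp only [Ring.lie_def]
  rw [Finset.sum_sub_distrib, Finset.sum_product, Finset.sum_product_right,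
    Finset.sum_mul_sum, Finset.sum_mul_sum]

theorem commute_sum_sum_of_lie_add_lie_eq_zero {A : Type*} [NonUnitalNonAssocRing A]
    {s : Finset ι} {f g : ι → A} (hdiag : ∀ i ∈ s, Commute (f i) (g i))
    (hanti : ∀ i ∈ s, ∀ j ∈ s, ⁅f i, g j⁆ + ⁅f j, g i⁆ = 0) :
    Commute (∑ i ∈ s, f i) (∑ j ∈ s, g j) := by
  rw [commute_iff_lie_eq, lie_sum_sum]
  refine Finset.sum_involution (fun p _ ↦ p.swap) ?cancel ?fixed ?mem fun p _ ↦ p.swap_swap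
  case cancel =>
    rintro ⟨i, j⟩ hij
    obtain ⟨hi, hj⟩ := Finset.mem_product.mp hij
    exact hanti i hi j hj
  case fixed =>
    rintro ⟨i, j⟩ hij hne hswap
    obtain rfl : j = i := congrArg Prod.fst hswap
    exact hne (hdiag j (Finset.mem_product.mp hij).1).lie_eq
  case mem =>
    exact fun p hp ↦ Finset.mem_product.mpr (Finset.mem_product.mp hp).symm

end Sums

/-- The commutation relations of the renormalized higher powers of white noise, for a family
`B n k t` standing for `Bⁿₖ(χ_{[0,t]})`. Times range over a meet-semilattice, `t ⊓ s` being the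
time attached to `χ_{[0,t]} · χ_{[0,s]}`. The field `commute` covers the cases in which an index
`n + N - 1` or `k + K - 1` would be truncated. -/
structure RHPWNRelations {A T : Type*} [NonUnitalNonAssocRing A] [SemilatticeInf T]
    (B : ℕ → ℕ → T → A) : Prop where
  commute : ∀ {n k N K : ℕ} (t s : T), k * N = K * n → Commute (B n k t) (B N K s)
  lie_eq : ∀ {n k N K : ℕ} (t s : T), 1 ≤ n + N → 1 ≤ k + K →
    ⁅B n k t, B N K s⁆ = (k * N - K * n : ℤ) • B (n + N - 1) (k + K - 1) (t ⊓ s)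

/-- The process `t ↦ ∑ (n, k) ∈ Λ, c (n, k) • B n k t` built from a family `B`. The
coefficients are a total function, of which only the values on `Λ` are read. -/
def rhpwnProcess {R A T : Type*} [AddCommMonoid A] [SMul R A] (B : ℕ → ℕ → T → A)
    (Λ : Finset (ℕ × ℕ)) (c : ℕ × ℕ → R) (t : T) : A :=
  ∑ p ∈ Λ, c p • B p.1 p.2 t

theorem isSelfAdjoint_rhpwnProcess {R A T : Type*} [Star R] [AddCommMonoid A] [StarAddMonoid A]
    [SMul R A] [StarModule R A] {B : ℕ → ℕ → T → A} {Λ : Finset (ℕ × ℕ)} {c : ℕ × ℕ → R} {t : T}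
    (hstar : ∀ n k, star (B n k t) = B k n t) (hΛ : ∀ p ∈ Λ, p.swap ∈ Λ)
    (hc : ∀ p ∈ Λ, c p = star (c p.swap)) :
    IsSelfAdjoint (rhpwnProcess B Λ c t) := by
  refine isSelfAdjoint_sum_of_star_eq Prod.swap hΛ (fun p _ ↦ p.swap_swap) fun p hp ↦ ?_
  rw [star_smul, hstar, hc p.swap (hΛ p hp), Prod.swap_swap, Prod.fst_swap, Prod.snd_swap]

namespace RHPWNRelations

variable {A T : Type*} [NonUnitalNonAssocRing A] [SemilatticeInf T] {B : ℕ → ℕ → T → A}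

theorem lie_swap_times (hB : RHPWNRelations B) (n k N K : ℕ) (t s : T) :
    ⁅B n k t, B N K s⁆ = ⁅B n k s, B N K t⁆ := by
  by_cases h : k * N = K * n
  · rw [(hB.commute t s h).lie_eq, (hB.commute s t h).lie_eq]
  · have hn : 1 ≤ n + N := by
      by_contra! hlt
      obtain ⟨rfl, rfl⟩ : n = 0 ∧ N = 0 := by lia
      exact h (by simp)
    have hk : 1 ≤ k + K := by
      by_contra! hlt
      obtain ⟨rfl, rfl⟩ : k = 0 ∧ K = 0 := by lia
      exact h (by simp)
    rw [hB.lie_eq t s hn hk, hB.lie_eq s t hn hk, inf_comm]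

theorem lie_add_lie_swap_indices (hB : RHPWNRelations B) (n k N K : ℕ) (t s : T) :
    ⁅B n k t, B N K s⁆ + ⁅B N K t, B n k s⁆ = 0 := by
  rw [hB.lie_swap_times, Ring.lie_def, Ring.lie_def, sub_add_sub_cancel, sub_self]

theorem commute_rhpwnProcess {R : Type*} [CommSemiring R] [Module R A] [IsScalarTower R A A]
    [SMulCommClass R A A] (hB : RHPWNRelations B) (Λ : Finset (ℕ × ℕ)) (c : ℕ × ℕ → R) (t s : T) :
    Commute (rhpwnProcess B Λ c t) (rhpwnProcess B Λ c s) := by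
  refine commute_sum_sum_of_lie_add_lie_eq_zero (fun p _ ↦ ?_) fun p _ q _ ↦ ?_
  · have hcomm : Commute (B p.1 p.2 t) (B p.1 p.2 s) := hB.commute t s rfl
    exact (hcomm.smul_left (c p)).smul_right (c p)
  · calc ⁅c p • B p.1 p.2 t, c q • B q.1 q.2 s⁆ + ⁅c q • B q.1 q.2 t, c p • B p.1 p.2 s⁆
      _ = (c p * c q) • (⁅B p.1 p.2 t, B q.1 q.2 s⁆ + ⁅B q.1 q.2 t, B p.1 p.2 s⁆) := by
        simp only [Ring.lie_def, smul_mul_smul_comm, smul_add, smul_sub, mul_comm (c q)]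
      _ = 0 := by rw [hB.lie_add_lie_swap_indices, smul_zero]

end RHPWNRelations

theorem rhpwn_classical_process_general {R A T : Type*} [CommSemiring R] [Star R]
    [NonUnitalNonAssocRing A] [StarAddMonoid A] [Module R A] [IsScalarTower R A A]
    [SMulCommClass R A A] [StarModule R A] [SemilatticeInf T] {B : ℕ → ℕ → T → A}
    (hstar : ∀ n k t, star (B n k t) = B k n t) (hB : RHPWNRelations B)
    (Λ : Finset (ℕ × ℕ)) (c : ℕ × ℕ → R) :
    ((∀ p ∈ Λ, p.swap ∈ Λ) → (∀ p ∈ Λ, c p = star (c p.swap)) →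
        ∀ t, IsSelfAdjoint (rhpwnProcess B Λ c t)) ∧
      ∀ t s, Commute (rhpwnProcess B Λ c t) (rhpwnProcess B Λ c s) :=
  ⟨fun hΛ hc t ↦ isSelfAdjoint_rhpwnProcess (hstar · · t) hΛ hc, hB.commute_rhpwnProcess Λ c⟩

theorem rhpwn_classical_process (A : Type*) [Ring A] [Algebra ℂ A] [StarRing A]
    [StarModule ℂ A]
    (B : ℕ → ℕ → ℝ → A)
    (hstar : ∀ (n k : ℕ) (t : ℝ), 0 ≤ t → star (B n k t) = B k n t)
    (hcomm0 : ∀ (n k N K : ℕ) (t s : ℝ), 0 ≤ t → 0 ≤ s → k * N = K * n →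
      B n k t * B N K s = B N K s * B n k t)
    (hcomm : ∀ (n k N K : ℕ) (t s : ℝ), 0 ≤ t → 0 ≤ s → 1 ≤ n + N → 1 ≤ k + K →
      B n k t * B N K s - B N K s * B n k t =
        ((k * N - K * n : ℤ) : ℂ) • B (n + N - 1) (k + K - 1) (min t s))
    (Λ : Finset (ℕ × ℕ)) (hΛ : ∀ p ∈ Λ, (p.2, p.1) ∈ Λ)
    (c : ℕ × ℕ → ℂ) (hc : ∀ p ∈ Λ, c p = (starRingEnd ℂ) (c (p.2, p.1)))
    (x : ℝ → A) (hx : ∀ t : ℝ, x t = ∑ p ∈ Λ, c p • B p.1 p.2 t) :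
    ∀ t s : ℝ, 0 ≤ t → 0 ≤ s → star (x t) = x t ∧ x t * x s = x s * x t := by
  have hB : RHPWNRelations fun n k (t : ℝ≥0) ↦ B n k t :=
    { commute := fun t s h ↦ hcomm0 _ _ _ _ t s t.2 s.2 h
      lie_eq := fun t s hn hk ↦
        (hcomm _ _ _ _ t s t.2 s.2 hn hk).trans (Int.cast_smul_eq_zsmul ℂ _ _) }
  obtain ⟨hself, hcommute⟩ :=
    rhpwn_classical_process_general (fun n k (t : ℝ≥0) ↦ hstar n k t t.2) hB Λ c
  intro t s ht hs
  rw [hx t, hx s]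
  exact ⟨hself hΛ hc ⟨t, ht⟩, hcommute ⟨t, ht⟩ ⟨s, hs⟩⟩
end

section
/- For t > 0, define p_t : ℝ → ℝ by p_t(x) = (2^{t−2}/(π·Γ(t))) · ‖Γ((t + ix)/2)‖², where Γ is the complex Gamma function (so that p_t(x) = (2^{t−1}/(2π))·β((t+ix)/2, (t−ix)/2) with β(a, c) = Γ(a)Γ(c)/Γ(a+c), since Γ((t−ix)/2) = conj(Γ((t+ix)/2)) and Γ(t) > 0). Then for every real s with |s| < π/2, the function x ↦ e^{sx}·p_t(x) is integrable on ℝ and ∫_{−∞}^{∞} e^{sx}·p_t(x) dx = (cos s)^{−t}. -/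
open MeasureTheory

/-!
For `Re a > 0`, the Mellin transform of `u ↦ e^{-au}` is `a^{-z} Γ(z)`: this is Euler's integral for
`a > 0`, and both sides are holomorphic in `a`. Take `a = e^{is}` with `|s| < π/2` and `z = σ + iy`.
Then `|a^{-z}| = e^{sy}`, so the square of the modulus of the Mellin transform is
`e^{2sy} |Γ(σ + iy)|²`. By Plancherel's theorem for the Mellin transform, its integral over `y` is
`2π ∫₀^∞ u^{2σ-1} e^{-2u cos s} du = 2π (2 cos s)^{-2σ} Γ(2σ)`. The theorem is the case `σ = t/2`
with `y = x/2`.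
-/

section Plancherel

open FourierTransform SchwartzMap

lemma integral_norm_sq_eq_lpNorm_sq {α F : Type*} [MeasurableSpace α] {μ : Measure α}
    [NormedAddCommGroup F] {f : α → F} (hf : AEStronglyMeasurable f μ) :
    ∫ x, ‖f x‖ ^ 2 ∂μ = lpNorm f 2 μ ^ 2 := by
  have hnonneg : 0 ≤ ∫ x, ‖f x‖ ^ 2 ∂μ := integral_nonneg fun _ ↦ sq_nonneg _
  have hsqrt : lpNorm f 2 μ = √(∫ x, ‖f x‖ ^ 2 ∂μ) := by
    simp [lpNorm_eq_integral_norm_rpow_toReal two_ne_zero ENNReal.ofNat_ne_top hf,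
      Real.sqrt_eq_rpow]
  rw [hsqrt, Real.sq_sqrt hnonneg]

variable {E F : Type*} [NormedAddCommGroup E] [InnerProductSpace ℝ E] [FiniteDimensional ℝ E]
  [MeasurableSpace E] [BorelSpace E] [NormedAddCommGroup F] [CompleteSpace F]

lemma integral_schwartz_smul_fourier [NormedSpace ℂ F] {f : E → F} (φ : 𝓢(E, ℂ))
    (hf : Integrable f) : ∫ ξ, φ ξ • 𝓕 f ξ = ∫ x, 𝓕 φ x • f x := by
  rw [SchwartzMap.fourier_coe]
  simpa using! (VectorFourier.integral_fourierIntegral_smul_eq_flip (L := innerₗ E)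
    Real.continuous_fourierChar continuous_inner φ.integrable hf).symm

variable [InnerProductSpace ℂ F] {f : E → F}

lemma integral_schwartz_smul_fourier_Lp (φ : 𝓢(E, ℂ)) (f : Lp (α := E) F 2 volume) :
    ∫ ξ, φ ξ • (𝓕 f : Lp (α := E) F 2 volume) ξ = ∫ x, 𝓕 φ x • f x := by
  have h := DFunLike.congr_fun (Lp.fourier_toTemperedDistribution_eq f) φ
  simpa only [TemperedDistribution.fourier_apply, Lp.toTemperedDistribution_apply] using h.symm

lemma fourier_ae_eq_fourier_toLp (hf : Integrable f) (hf₂ : MemLp f 2) :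
    𝓕 f =ᵐ[volume] (𝓕 (hf₂.toLp f) : Lp (α := E) F 2 volume) := by
  have hcont : Continuous (𝓕 f) :=
    VectorFourier.fourierIntegral_continuous Real.continuous_fourierChar continuous_inner hf
  refine ae_eq_of_integral_contDiff_smul_eq hcont.locallyIntegrable
    ((Lp.memLp _).locallyIntegrable one_le_two) fun g g_smooth g_supp ↦ ?_
  have hg_supp : HasCompactSupport (Complex.ofRealCLM ∘ g) := g_supp.comp_left rfl
  let φ : 𝓢(E, ℂ) := hg_supp.toSchwartzMap (Complex.ofRealCLM.contDiff.comp g_smooth)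
  calc ∫ ξ, g ξ • 𝓕 f ξ
      = ∫ x, 𝓕 φ x • f x := integral_schwartz_smul_fourier φ hf
    _ = ∫ x, 𝓕 φ x • (hf₂.toLp f) x := by
        refine integral_congr_ae ?_
        filter_upwards [hf₂.coeFn_toLp] with x hx
        rw [hx]
    _ = ∫ ξ, g ξ • (𝓕 (hf₂.toLp f) : Lp (α := E) F 2 volume) ξ :=
        (integral_schwartz_smul_fourier_Lp φ _).symm

lemma memLp_two_fourier (hf : Integrable f) (hf₂ : MemLp f 2) : MemLp (𝓕 f) 2 :=
  (memLp_congr_ae (fourier_ae_eq_fourier_toLp hf hf₂)).2 (Lp.memLp _)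

lemma lpNorm_two_fourier (hf : Integrable f) (hf₂ : MemLp f 2) :
    lpNorm (𝓕 f) 2 volume = lpNorm f 2 volume := by
  have hF := memLp_two_fourier hf hf₂
  have htoLp : hF.toLp (𝓕 f) = 𝓕 (hf₂.toLp f) :=
    Lp.ext (hF.coeFn_toLp.trans (fourier_ae_eq_fourier_toLp hf hf₂))
  rw [← toReal_eLpNorm hF.1, ← toReal_eLpNorm hf₂.1, ← Lp.norm_toLp _ hF, ← Lp.norm_toLp _ hf₂,
    htoLp, Lp.norm_fourier_eq]

lemma integral_norm_sq_fourier (hf : Integrable f) (hf₂ : MemLp f 2) :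
    ∫ ξ, ‖𝓕 f ξ‖ ^ 2 = ∫ x, ‖f x‖ ^ 2 := by
  rw [integral_norm_sq_eq_lpNorm_sq (memLp_two_fourier hf hf₂).1,
    integral_norm_sq_eq_lpNorm_sq hf₂.1, lpNorm_two_fourier hf hf₂]

end Plancherel

section MellinPlancherel

open Real Set FourierTransform

section ExpNegSubstitution

variable {F : Type*} [NormedAddCommGroup F] [NormedSpace ℝ F]

lemma hasDerivWithinAt_exp_neg (v : ℝ) (s : Set ℝ) :
    HasDerivWithinAt (fun v ↦ exp (-v)) (-exp (-v)) s v := by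
  simpa using (hasDerivAt_neg v).exp.hasDerivWithinAt

lemma injective_exp_neg : Function.Injective fun v : ℝ ↦ exp (-v) :=
  exp_injective.comp neg_injective

lemma image_exp_neg_univ : (fun v : ℝ ↦ exp (-v)) '' univ = Ioi 0 := by
  rw [image_univ, ← range_exp]
  exact neg_surjective.range_comp exp

lemma integrableOn_Ioi_iff_integrable_comp_exp_neg (h : ℝ → F) :
    IntegrableOn h (Ioi 0) ↔ Integrable fun v ↦ exp (-v) • h (exp (-v)) := by
  rw [← image_exp_neg_univ, integrableOn_image_iff_integrableOn_abs_deriv_smul .univ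
    (fun v _ ↦ hasDerivWithinAt_exp_neg v univ) injective_exp_neg.injOn]
  simp

lemma integral_Ioi_eq_integral_comp_exp_neg (h : ℝ → F) :
    ∫ u in Ioi 0, h u = ∫ v, exp (-v) • h (exp (-v)) := by
  rw [← image_exp_neg_univ, integral_image_eq_integral_abs_deriv_smul .univ
    (fun v _ ↦ hasDerivWithinAt_exp_neg v univ) injective_exp_neg.injOn]
  simp

end ExpNegSubstitution

lemma exp_neg_mul_exp_neg_rpow_sub_one (σ v : ℝ) :
    exp (-v) * exp (-v) ^ (σ - 1) = exp (-σ * v) := by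
  rw [← exp_mul, ← exp_add]
  ring_nf

section ExpNegPullback

variable {F : Type*} [NormedAddCommGroup F] [NormedSpace ℂ F] {f : ℝ → F} {σ : ℝ}

/-- The weighted pullback of `f` along `v ↦ e⁻ᵛ`, normalized so that its Fourier transform at
`y / 2π` is the Mellin transform of `f` at `σ + iy`. -/
noncomputable def expNegPullback (f : ℝ → F) (σ v : ℝ) : F := exp (-σ * v) • f (exp (-v))

lemma mellin_vertical_eq_fourier (f : ℝ → F) (σ y : ℝ) :
    mellin f (σ + y * Complex.I) = 𝓕 (expNegPullback f σ) (y / (2 * π)) := by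
  have hre : (σ + y * Complex.I).re = σ := by simp
  have him : (σ + y * Complex.I).im = y := by simp
  rw [mellin_eq_fourier, hre, him]
  rfl

lemma norm_sq_expNegPullback (f : ℝ → F) (σ v : ℝ) :
    ‖expNegPullback f σ v‖ ^ 2 =
      exp (-v) • (exp (-v) ^ (2 * σ - 1) * ‖f (exp (-v))‖ ^ 2) := by
  rw [smul_eq_mul, ← mul_assoc, exp_neg_mul_exp_neg_rpow_sub_one, expNegPullback, norm_smul,
    mul_pow, norm_of_nonneg (exp_pos _).le, ← exp_nat_mul]
  push_cast
  ring_nf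

lemma integrable_expNegPullback (hf : MellinConvergent f σ) : Integrable (expNegPullback f σ) := by
  refine ((integrableOn_Ioi_iff_integrable_comp_exp_neg _).1 hf).congr (.of_forall fun v ↦ ?_)
  have hpow : (exp (-v) : ℂ) ^ (σ - 1 : ℂ) = (exp (-v) ^ (σ - 1) : ℝ) := by
    rw [Complex.ofReal_cpow (exp_pos _).le, Complex.ofReal_sub, Complex.ofReal_one]
  simp only [expNegPullback]
  rw [← exp_neg_mul_exp_neg_rpow_sub_one, mul_smul, hpow, Complex.coe_smul]

lemma memLp_two_expNegPullback (hf : MellinConvergent f σ)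
    (hf₂ : IntegrableOn (fun u ↦ u ^ (2 * σ - 1) * ‖f u‖ ^ 2) (Ioi 0)) :
    MemLp (expNegPullback f σ) 2 := by
  rw [memLp_two_iff_integrable_sq_norm (integrable_expNegPullback hf).aestronglyMeasurable]
  simp_rw [norm_sq_expNegPullback]
  exact (integrableOn_Ioi_iff_integrable_comp_exp_neg _).1 hf₂

end ExpNegPullback

variable {F : Type*} [NormedAddCommGroup F] [InnerProductSpace ℂ F] [CompleteSpace F] {f : ℝ → F}
  {σ : ℝ}

lemma integrable_norm_sq_mellin (hf : MellinConvergent f σ)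
    (hf₂ : IntegrableOn (fun u ↦ u ^ (2 * σ - 1) * ‖f u‖ ^ 2) (Ioi 0)) :
    Integrable fun y : ℝ ↦ ‖mellin f (σ + y * Complex.I)‖ ^ 2 := by
  simp_rw [mellin_vertical_eq_fourier]
  have hfourier : MemLp (𝓕 (expNegPullback f σ)) 2 :=
    memLp_two_fourier (integrable_expNegPullback hf) (memLp_two_expNegPullback hf hf₂)
  exact hfourier.norm.integrable_sq.comp_div two_pi_pos.ne'

lemma integral_norm_sq_mellin (hf : MellinConvergent f σ)
    (hf₂ : IntegrableOn (fun u ↦ u ^ (2 * σ - 1) * ‖f u‖ ^ 2) (Ioi 0)) :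
    ∫ y : ℝ, ‖mellin f (σ + y * Complex.I)‖ ^ 2 =
      2 * π * ∫ u in Ioi 0, u ^ (2 * σ - 1) * ‖f u‖ ^ 2 := by
  calc ∫ y : ℝ, ‖mellin f (σ + y * Complex.I)‖ ^ 2
      = ∫ y : ℝ, ‖𝓕 (expNegPullback f σ) (y / (2 * π))‖ ^ 2 := by
        simp_rw [mellin_vertical_eq_fourier]
    _ = 2 * π * ∫ ξ, ‖𝓕 (expNegPullback f σ) ξ‖ ^ 2 := by
        rw [Measure.integral_comp_div (fun ξ ↦ ‖𝓕 (expNegPullback f σ) ξ‖ ^ 2),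
          abs_of_pos two_pi_pos, smul_eq_mul]
    _ = 2 * π * ∫ v, ‖expNegPullback f σ v‖ ^ 2 := by
        rw [integral_norm_sq_fourier (integrable_expNegPullback hf)
          (memLp_two_expNegPullback hf hf₂)]
    _ = 2 * π * ∫ u in Ioi 0, u ^ (2 * σ - 1) * ‖f u‖ ^ 2 := by
        simp_rw [norm_sq_expNegPullback, integral_Ioi_eq_integral_comp_exp_neg]

end MellinPlancherel

section MellinExp

open Complex Set Filter Topology

variable {a z : ℂ}

lemma norm_cexp_neg_mul_ofReal (a : ℂ) (u : ℝ) : ‖cexp (-(a * u))‖ = Real.exp (-a.re * u) := by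
  simp [norm_exp]

lemma mellinConvergent_cexp_neg_mul (ha : 0 < a.re) (hz : 0 < z.re) :
    MellinConvergent (fun u : ℝ ↦ cexp (-(a * u))) z := by
  have hcont : Continuous fun u : ℝ ↦ cexp (-(a * u)) := by fun_prop
  refine mellinConvergent_of_isBigO_rpow_exp ha
    (hcont.locallyIntegrable.locallyIntegrableOn _) ?_ ?_ hz
  · exact .of_norm_right (.of_bound 1 (.of_forall fun u ↦ by simp [norm_exp]))
  · simpa using! ((hcont.tendsto 0).isBigO_one ℝ).mono nhdsWithin_le_nhds

lemma hasDerivAt_cpow_smul_cexp_neg_mul (z b : ℂ) {u : ℝ} (hu : 0 < u) :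
    HasDerivAt (fun a : ℂ ↦ (u : ℂ) ^ (z - 1) • cexp (-(a * u)))
      (-((u : ℂ) ^ (z + 1 - 1) • cexp (-(b * u)))) b := by
  have hexp : HasDerivAt (fun a : ℂ ↦ cexp (-(a * u))) (cexp (-(b * u)) * -u) b := by
    simpa using ((hasDerivAt_id b).mul_const (u : ℂ)).fun_neg.cexp
  have hpow : (u : ℂ) ^ (z + 1 - 1) = (u : ℂ) ^ (z - 1) * u := by
    rw [add_sub_cancel_right, cpow_sub _ _ (mod_cast hu.ne'), cpow_one,
      div_mul_cancel₀ _ (mod_cast hu.ne')]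
  refine (hexp.const_smul ((u : ℂ) ^ (z - 1))).congr_deriv ?_
  rw [hpow, smul_eq_mul, smul_eq_mul]
  ring

lemma hasDerivAt_mellin_cexp_neg_mul (ha : 0 < a.re) (hz : 0 < z.re) :
    HasDerivAt (fun b : ℂ ↦ mellin (fun u ↦ cexp (-(b * u))) z)
      (-mellin (fun u ↦ cexp (-(a * u))) (z + 1)) a := by
  have hz1 : 0 < (z + 1).re := by simpa using by linarith
  have ha2 : 0 < (a / 2).re := by simpa using ha
  have hnear : {b : ℂ | (a / 2).re < b.re} ∈ 𝓝 a :=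
    (isOpen_lt continuous_const continuous_re).mem_nhds (by simpa using ha)
  have hpos : ∀ᶠ b : ℂ in 𝓝 a, 0 < b.re := continuous_re.continuousAt.eventually_const_lt ha
  have hderiv := hasDerivAt_integral_of_dominated_loc_of_deriv_le
    (μ := volume.restrict (Ioi (0 : ℝ)))
    (F := fun (b : ℂ) (u : ℝ) ↦ (u : ℂ) ^ (z - 1) • cexp (-(b * u)))
    (F' := fun b u ↦ -((u : ℂ) ^ (z + 1 - 1) • cexp (-(b * u))))
    (bound := fun u ↦ ‖(u : ℂ) ^ (z + 1 - 1) • cexp (-(a / 2 * u))‖) hnear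
    (hpos.mono fun b hb ↦ (mellinConvergent_cexp_neg_mul hb hz).aestronglyMeasurable)
    (mellinConvergent_cexp_neg_mul ha hz)
    (mellinConvergent_cexp_neg_mul ha hz1).aestronglyMeasurable.neg
    ?_ (mellinConvergent_cexp_neg_mul ha2 hz1).norm ?_
  · simpa only [mellin, integral_neg] using hderiv.2
  · filter_upwards [ae_restrict_mem measurableSet_Ioi] with u (hu : 0 < u) b (hb : _ < b.re)
    rw [norm_neg, norm_smul, norm_smul, norm_cexp_neg_mul_ofReal, norm_cexp_neg_mul_ofReal]
    gcongr
  · filter_upwards [ae_restrict_mem measurableSet_Ioi] with u hu b _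
    exact hasDerivAt_cpow_smul_cexp_neg_mul z b hu

lemma mellin_cexp_neg_ofReal_mul {r : ℝ} (hr : 0 < r) (hz : 0 < z.re) :
    mellin (fun u ↦ cexp (-(r * u))) z = (r : ℂ) ^ (-z) * Gamma z := by
  have hinv : (1 / (r : ℂ)) ^ z = (r : ℂ) ^ (-z) := by
    have harg : (r : ℂ).arg ≠ Real.pi := by
      simp [arg_ofReal_of_nonneg hr.le, Real.pi_ne_zero.symm]
    rw [one_div, inv_cpow _ _ harg, cpow_neg]
  rw [← hinv]
  exact integral_cpow_mul_exp_neg_mul_Ioi hz hr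

lemma mellin_cexp_neg_mul (ha : 0 < a.re) (hz : 0 < z.re) :
    mellin (fun u ↦ cexp (-(a * u))) z = a ^ (-z) * Gamma z := by
  have hopen : IsOpen {b : ℂ | 0 < b.re} := isOpen_lt continuous_const continuous_re
  have hmellin : DifferentiableOn ℂ (fun b ↦ mellin (fun u ↦ cexp (-(b * u))) z) {b | 0 < b.re} :=
    fun b hb ↦ (hasDerivAt_mellin_cexp_neg_mul hb hz).differentiableAt.differentiableWithinAt
  have hcpow : DifferentiableOn ℂ (fun b : ℂ ↦ b ^ (-z) * Gamma z) {b | 0 < b.re} := fun b hb ↦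
    ((differentiableAt_id.cpow_const (.inl hb)).mul_const _).differentiableWithinAt
  have hreal : Tendsto ofReal (𝓝[≠] 1) (𝓝[≠] 1) :=
    tendsto_nhdsWithin_of_tendsto_nhds_of_eventually_within _
      (continuous_ofReal.tendsto' 1 1 ofReal_one |>.mono_left nhdsWithin_le_nhds)
      (eventually_mem_nhdsWithin.mono fun r hr ↦ ofReal_ne_one.2 hr)
  have hpos : ∀ᶠ r : ℝ in 𝓝[≠] 1, 0 < r := nhdsWithin_le_nhds (lt_mem_nhds one_pos)
  exact (hmellin.analyticOnNhd hopen).eqOn_of_preconnected_of_frequently_eq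
    (hcpow.analyticOnNhd hopen) (convex_halfSpace_re_gt 0).isPreconnected (z₀ := 1) (by simp)
    (hreal.frequently (hpos.mono fun r hr ↦ mellin_cexp_neg_ofReal_mul hr hz).frequently) ha

end MellinExp

section GammaVerticalLine

open Real Set

variable {s σ : ℝ}

lemma norm_cexp_mul_I_cpow (hs : s ∈ Ioc (-π) π) (w : ℂ) :
    ‖Complex.exp (s * Complex.I) ^ w‖ = exp (-(s * w.im)) := by
  have harg : (Complex.exp (s * Complex.I)).arg = s := by
    rw [Complex.exp_mul_I, Complex.arg_cos_add_sin_mul_I hs]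
  rw [Complex.norm_cpow_of_ne_zero (Complex.exp_ne_zero _), Complex.norm_exp_ofReal_mul_I,
    harg, one_rpow, one_div, exp_neg]

lemma norm_sq_cexp_neg_mul_ofReal (a : ℂ) (u : ℝ) :
    ‖Complex.exp (-(a * u))‖ ^ 2 = exp (-(2 * a.re * u)) := by
  rw [norm_cexp_neg_mul_ofReal, ← exp_nat_mul]
  push_cast
  ring_nf

lemma integrableOn_rpow_mul_norm_sq_cexp_neg_mul {a : ℂ} (ha : 0 < a.re) {p : ℝ} (hp : -1 < p) :
    IntegrableOn (fun u : ℝ ↦ u ^ p * ‖Complex.exp (-(a * u))‖ ^ 2) (Ioi 0) := by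
  simp_rw [norm_sq_cexp_neg_mul_ofReal]
  simpa using integrableOn_rpow_mul_exp_neg_mul_rpow hp one_pos (mul_pos two_pos ha)

lemma integral_rpow_mul_norm_sq_cexp_neg_mul {a : ℂ} (ha : 0 < a.re) {q : ℝ} (hq : 0 < q) :
    ∫ u : ℝ in Ioi 0, u ^ (q - 1) * ‖Complex.exp (-(a * u))‖ ^ 2 =
      (2 * a.re) ^ (-q) * Gamma q := by
  simp_rw [norm_sq_cexp_neg_mul_ofReal]
  rw [integral_rpow_mul_exp_neg_mul_Ioi hq (by positivity), one_div, inv_rpow (by positivity),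
    rpow_neg (by positivity)]

lemma re_cexp_mul_I_pos (hs : s ∈ Ioo (-(π / 2)) (π / 2)) :
    0 < (Complex.exp (s * Complex.I)).re := by
  rw [Complex.exp_ofReal_mul_I_re]
  exact cos_pos_of_mem_Ioo hs

lemma norm_sq_mellin_cexp_neg_cexp_mul_I (hs : s ∈ Ioo (-(π / 2)) (π / 2)) (hσ : 0 < σ) (y : ℝ) :
    ‖mellin (fun u ↦ Complex.exp (-(Complex.exp (s * Complex.I) * u))) (σ + y * Complex.I)‖ ^ 2 =
      exp (2 * s * y) * ‖Complex.Gamma (σ + y * Complex.I)‖ ^ 2 := by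
  have hs' : s ∈ Ioc (-π) π := ⟨by linarith [hs.1, pi_pos], by linarith [hs.2, pi_pos]⟩
  have him : (-(σ + y * Complex.I)).im = -y := by simp
  rw [mellin_cexp_neg_mul (re_cexp_mul_I_pos hs) (by simpa using hσ), norm_mul, mul_pow,
    norm_cexp_mul_I_cpow hs', him, ← exp_nat_mul]
  push_cast
  ring_nf

lemma integrable_exp_mul_norm_sq_Gamma (hs : s ∈ Ioo (-(π / 2)) (π / 2)) (hσ : 0 < σ) :
    Integrable fun y : ℝ ↦ exp (2 * s * y) * ‖Complex.Gamma (σ + y * Complex.I)‖ ^ 2 := by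
  have ha := re_cexp_mul_I_pos hs
  simp_rw [← norm_sq_mellin_cexp_neg_cexp_mul_I hs hσ]
  exact integrable_norm_sq_mellin (mellinConvergent_cexp_neg_mul ha (by simpa using hσ))
    (integrableOn_rpow_mul_norm_sq_cexp_neg_mul ha (by linarith))

lemma integral_exp_mul_norm_sq_Gamma (hs : s ∈ Ioo (-(π / 2)) (π / 2)) (hσ : 0 < σ) :
    ∫ y : ℝ, exp (2 * s * y) * ‖Complex.Gamma (σ + y * Complex.I)‖ ^ 2 =
      2 * π * ((2 * cos s) ^ (-(2 * σ)) * Gamma (2 * σ)) := by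
  have ha := re_cexp_mul_I_pos hs
  simp_rw [← norm_sq_mellin_cexp_neg_cexp_mul_I hs hσ]
  rw [integral_norm_sq_mellin (mellinConvergent_cexp_neg_mul ha (by simpa using hσ))
      (integrableOn_rpow_mul_norm_sq_cexp_neg_mul ha (by linarith)),
    integral_rpow_mul_norm_sq_cexp_neg_mul ha (by linarith), Complex.exp_ofReal_mul_I_re]

end GammaVerticalLine

theorem continuous_binomial_mgf (t : ℝ) (ht : 0 < t) (p : ℝ → ℝ)
    (hp : ∀ x : ℝ, p x = 2 ^ (t - 2) / (Real.pi * Real.Gamma t) *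
        ‖Complex.Gamma ((t + x * Complex.I) / 2)‖ ^ 2) :
    ∀ s : ℝ, |s| < Real.pi / 2 →
      Integrable (fun x : ℝ => Real.exp (s * x) * p x) ∧
      ∫ x : ℝ, Real.exp (s * x) * p x = Real.cos s ^ (-t) := by
  intro s hs
  have hs' : s ∈ Set.Ioo (-(Real.pi / 2)) (Real.pi / 2) := abs_lt.1 hs
  have hcos : 0 < Real.cos s := Real.cos_pos_of_mem_Ioo hs'
  let g (y : ℝ) : ℝ := Real.exp (2 * s * y) * ‖Complex.Gamma ((t / 2 : ℝ) + y * Complex.I)‖ ^ 2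
  have hg : ∀ x, Real.exp (s * x) * p x =
      2 ^ (t - 2) / (Real.pi * Real.Gamma t) * g (x / 2) := fun x ↦ by
    have harg : ((t / 2 : ℝ) + (x / 2 : ℝ) * Complex.I : ℂ) = (t + x * Complex.I) / 2 := by
      push_cast
      ring
    simp only [g, harg, hp]
    ring_nf
  simp_rw [hg]
  have hg_int : Integrable g := integrable_exp_mul_norm_sq_Gamma hs' (half_pos ht)
  refine ⟨(hg_int.comp_div two_ne_zero).const_mul _, ?_⟩
  rw [integral_const_mul, Measure.integral_comp_div g,
    integral_exp_mul_norm_sq_Gamma hs' (half_pos ht), mul_div_cancel₀ t two_ne_zero,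
    Real.mul_rpow two_pos.le hcos.le, Real.rpow_sub two_pos, Real.rpow_neg two_pos.le]
  simp [field]
end

section
/- Let σₖ, ρₖ : ℝ → ℂ (k = 0, 1, 2, …) be functions with σ₀ = ρ₀ = 1 (the constant function 1), and suppose that for every integer n ≥ 1 and every t ∈ ℝ: (n+1)·ρₙ(t) = n·σ₁(t)·ρ_{n−1}(t) and (n+1)·ρₙ(t) = conj(σ_{n−1}(t))·σ₁(t). Then: (a) σ₁ is real-valued; (b) for every n ≥ 0 and every t, ρₙ(t) = σ₁(t)ⁿ/(n+1); and (c) for every n ≥ 1 and every t with σ₁(t) ≠ 0, conj(σ_{n−1}(t)) = σ₁(t)^{n−1}. -/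
/-!
The sequence `(n + 1) ρₙ` satisfies the geometric recurrence with ratio `σ₁` and starts at `1`, so
it equals `σ₁ⁿ`. The second recurrence then reads `conj(σₙ) σ₁ = σ₁ⁿ⁺¹`, from which `σ₁` can be
cancelled where it does not vanish; the case `n = 1` says that `σ₁` is its own conjugate.
-/

theorem succ_mul_eq_pow_of_recurrence {R : Type*} [CommSemiring R] {s : R} {ρ : ℕ → R}
    (zero : ρ 0 = 1)
    (succ : ∀ n : ℕ, ((n + 1 : ℕ) + 1 : R) * ρ (n + 1) = (n + 1 : ℕ) * s * ρ n) (n : ℕ) :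
    (n + 1 : R) * ρ n = s ^ n := by
  induction n with
  | zero => simp [zero]
  | succ n ih =>
    calc ((n + 1 : ℕ) + 1 : R) * ρ (n + 1)
        = (n + 1 : ℕ) * s * ρ n := succ n
      _ = (n + 1 : R) * ρ n * s := by push_cast; ring
      _ = s ^ (n + 1) := by rw [ih, pow_succ]

theorem isSelfAdjoint_of_star_mul_self_eq_sq {R : Type*} [Semiring R] [IsRightCancelMulZero R]
    [StarRing R] {s : R} (h : star s * s = s ^ 2) : IsSelfAdjoint s := by
  rcases eq_or_ne s 0 with rfl | hs
  · exact .zero R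
  · exact mul_right_cancel₀ hs (h.trans (sq s))

theorem rhpwn_vacuum_action_compatibility_general {X K : Type*} [Field K] [CharZero K] [StarRing K]
    (σ ρ : ℕ → X → K) (hρ0 : ∀ t, ρ 0 t = 1)
    (h1 : ∀ (n : ℕ) (t : X), ((n + 1 : ℕ) + 1 : K) * ρ (n + 1) t = (n + 1 : ℕ) * σ 1 t * ρ n t)
    (h2 : ∀ (n : ℕ) (t : X), ((n + 1 : ℕ) + 1 : K) * ρ (n + 1) t = star (σ n t) * σ 1 t) :
    (∀ t, IsSelfAdjoint (σ 1 t)) ∧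
    (∀ (n : ℕ) (t : X), ρ n t = σ 1 t ^ n / (n + 1)) ∧
    (∀ (n : ℕ) (t : X), σ 1 t ≠ 0 → star (σ n t) = σ 1 t ^ n) := by
  have succ_mul_ρ (n : ℕ) (t : X) : (n + 1 : K) * ρ n t = σ 1 t ^ n :=
    succ_mul_eq_pow_of_recurrence (ρ := fun n => ρ n t) (hρ0 t) (fun n => h1 n t) n
  have star_σ_mul (n : ℕ) (t : X) : star (σ n t) * σ 1 t = σ 1 t ^ (n + 1) :=
    (h2 n t).symm.trans (succ_mul_ρ (n + 1) t)
  refine ⟨fun t => isSelfAdjoint_of_star_mul_self_eq_sq (star_σ_mul 1 t), fun n t => ?_,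
    fun n t hσ => mul_right_cancel₀ hσ ((star_σ_mul n t).trans (pow_succ _ n))⟩
  exact eq_div_of_mul_eq n.cast_add_one_ne_zero ((mul_comm _ _).trans (succ_mul_ρ n t))

theorem rhpwn_vacuum_action_compatibility (σ ρ : ℕ → ℝ → ℂ)
    (hσ0 : ∀ t : ℝ, σ 0 t = 1) (hρ0 : ∀ t : ℝ, ρ 0 t = 1)
    (h1 : ∀ n : ℕ, 1 ≤ n → ∀ t : ℝ,
      (n + 1 : ℂ) * ρ n t = n * σ 1 t * ρ (n - 1) t)
    (h2 : ∀ n : ℕ, 1 ≤ n → ∀ t : ℝ,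
      (n + 1 : ℂ) * ρ n t = (starRingEnd ℂ) (σ (n - 1) t) * σ 1 t) :
    (∀ t : ℝ, (σ 1 t).im = 0) ∧
    (∀ (n : ℕ) (t : ℝ), ρ n t = σ 1 t ^ n / (n + 1)) ∧
    (∀ n : ℕ, 1 ≤ n → ∀ t : ℝ, σ 1 t ≠ 0 →
      (starRingEnd ℂ) (σ (n - 1) t) = σ 1 t ^ (n - 1)) := by
  obtain ⟨real, hρ, hσ⟩ := rhpwn_vacuum_action_compatibility_general σ ρ hρ0
    (fun n => h1 (n + 1) n.succ_pos) (fun n => h2 (n + 1) n.succ_pos)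
  exact ⟨fun t => Complex.conj_eq_iff_im.mp (real t), hρ, fun n _ => hσ (n - 1)⟩
end
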